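/- Let W ⊆ V be a subspace with a Lie bracket [·,·], L_W its lifted Dirac structure, and (A,u) ∈ N_{L_W}. Then the 1-cochain ω_{(A,u)}(l) = ⟨(A,u),l⟩ on L_W is a coboundary — i.e. there exists e ∈ V such that ⟨(A,u),(B,v)⟩ = B(e) for all (B,v) ∈ L_W — if and only if the restriction of A to W is an inner derivation of (W,[·,·]), i.e. there exists v₀ ∈ W with A(w) = [v₀,w] for all w ∈ W. -/

import Mathlib

variable {V : Type*} [AddCommGroup V] [Module ℝ V] [FiniteDimensional ℝ V]

/-- The bracket of the omni-Lie algebra `ℰ = End(V) × V`: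
`⦃(A,u),(B,v)⦄ = (A∘B − B∘A, A(v))`. -/
def obr (X Y : (V →ₗ[ℝ] V) × V) : (V →ₗ[ℝ] V) × V :=
  (X.1 ∘ₗ Y.1 - Y.1 ∘ₗ X.1, X.1 Y.2)

/-- The symmetric `V`-valued pairing `⟨(A,u),(B,v)⟩ = (1/2)(A(v) + B(u))`. -/
noncomputable def opair (X Y : (V →ₗ[ℝ] V) × V) : V :=
  (1/2 : ℝ) • (X.1 Y.2 + Y.1 X.2)

/-- The lifted Dirac structure `L_W = {(A,u) ∈ ℰ : u ∈ W and A(w) = [u,w] for all w ∈ W}`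
of a subspace `W ⊆ V` equipped with a bilinear bracket `br`. -/
def liftSet (W : Submodule ℝ V) (br : W →ₗ[ℝ] W →ₗ[ℝ] W) :
    Set ((V →ₗ[ℝ] V) × V) :=
  {X | ∃ hu : X.2 ∈ W, ∀ w : W, X.1 w = (br ⟨X.2, hu⟩ w : V)}

/-!
Twice the equation `⟨(A,u),(B,v)⟩ = B(e)` reads `A(v) + B(u - 2e) = 0`, so `ω_{(A,u)}` is the
coboundary of `e` exactly when `(A, u - 2e)` is orthogonal to `L_W`. Since `L_W` is its own
orthogonal complement, this says that `(A, u - 2e) ∈ L_W`, that is, that `A` restricts on `W` to the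
inner derivation by `u - 2e`.
-/

section LiftedDiracStructure

theorem mem_of_forall_end_apply_eq_zero {K M : Type*} [DivisionRing K] [AddCommGroup M]
    [Module K M] {p : Submodule K M} {x : M}
    (h : ∀ f : M →ₗ[K] M, (∀ y ∈ p, f y = 0) → f x = 0) : x ∈ p := by
  by_contra hx
  obtain ⟨φ, hφx, hφp⟩ := p.exists_le_ker_of_notMem hx
  have hφxx : φ x • x = 0 := h (φ.smulRight x) fun y hy => by
    rw [LinearMap.smulRight_apply, LinearMap.mem_ker.mp (hφp hy), zero_smul]
  have hx0 : x = 0 := (smul_eq_zero.mp hφxx).resolve_left hφx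
  exact hx (hx0 ▸ p.zero_mem)

variable {E : Type*} [AddCommGroup E] [Module ℝ E]
  {W : Submodule ℝ E} {br : W →ₗ[ℝ] W →ₗ[ℝ] W}

theorem opair_eq_zero_iff {X Y : (E →ₗ[ℝ] E) × E} : opair X Y = 0 ↔ X.1 Y.2 + Y.1 X.2 = 0 :=
  smul_eq_zero_iff_right (by norm_num)

theorem opair_eq_apply_iff {A : E →ₗ[ℝ] E} {u e : E} {l : (E →ₗ[ℝ] E) × E} :
    opair (A, u) l = l.1 e ↔ opair (A, u - (2 : ℝ) • e) l = 0 := by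
  have h : opair (A, u - (2 : ℝ) • e) l = opair (A, u) l - l.1 e := by
    simp only [opair, map_sub, map_smul]
    module
  rw [h, sub_eq_zero]

theorem mk_coe_mem_liftSet_iff {B : E →ₗ[ℝ] E} {v : W} :
    (B, (v : E)) ∈ liftSet W br ↔ ∀ w : W, B w = (br v w : E) :=
  ⟨fun ⟨_, hB⟩ => hB, fun hB => ⟨v.2, hB⟩⟩

theorem mk_zero_mem_liftSet_iff {B : E →ₗ[ℝ] E} :
    (B, 0) ∈ liftSet W br ↔ ∀ w ∈ W, B w = 0 := by
  simpa using mk_coe_mem_liftSet_iff (br := br) (B := B) (v := 0)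

theorem exists_mk_mem_liftSet_iff {A : E →ₗ[ℝ] E} :
    (∃ v : E, (A, v) ∈ liftSet W br) ↔ ∃ v : W, ∀ w : W, A w = (br v w : E) :=
  ⟨fun ⟨v, hv, hA⟩ => ⟨⟨v, hv⟩, hA⟩, fun ⟨v, hA⟩ => ⟨v, v.2, hA⟩⟩

theorem exists_mk_coe_mem_liftSet (br : W →ₗ[ℝ] W →ₗ[ℝ] W) (v : W) :
    ∃ B : E →ₗ[ℝ] E, (B, (v : E)) ∈ liftSet W br := by
  obtain ⟨B, hB⟩ := LinearMap.exists_extend (W.subtype ∘ₗ br v)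
  exact ⟨B, mk_coe_mem_liftSet_iff.mpr (LinearMap.congr_fun hB)⟩

theorem opair_eq_zero_of_mem_liftSet (hskew : ∀ v w : W, br v w = -br w v)
    {X Y : (E →ₗ[ℝ] E) × E} (hX : X ∈ liftSet W br) (hY : Y ∈ liftSet W br) :
    opair X Y = 0 := by
  obtain ⟨hu, hX⟩ := hX
  obtain ⟨hv, hY⟩ := hY
  rw [opair_eq_zero_iff, hX ⟨Y.2, hv⟩, hY ⟨X.2, hu⟩, hskew, Submodule.coe_neg, neg_add_cancel]

theorem mem_liftSet_of_forall_opair_eq_zero (hskew : ∀ v w : W, br v w = -br w v)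
    {X : (E →ₗ[ℝ] E) × E} (hX : ∀ l ∈ liftSet W br, opair X l = 0) : X ∈ liftSet W br := by
  have hX_add : ∀ l ∈ liftSet W br, X.1 l.2 + l.1 X.2 = 0 := fun l hl =>
    opair_eq_zero_iff.mp (hX l hl)
  have hX_mem : X.2 ∈ W := mem_of_forall_end_apply_eq_zero fun B hB => by
    simpa using hX_add (B, 0) (mk_zero_mem_liftSet_iff.mpr hB)
  refine ⟨hX_mem, fun w => ?_⟩
  obtain ⟨B, hB⟩ := exists_mk_coe_mem_liftSet br w
  calc X.1 w = -B X.2 := eq_neg_of_add_eq_zero_left (hX_add _ hB)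
    _ = -(br w ⟨X.2, hX_mem⟩ : E) := by rw [← mk_coe_mem_liftSet_iff.mp hB]
    _ = (br ⟨X.2, hX_mem⟩ w : E) := by rw [hskew ⟨X.2, hX_mem⟩ w, Submodule.coe_neg]

theorem forall_opair_eq_zero_iff_mem_liftSet (hskew : ∀ v w : W, br v w = -br w v)
    {X : (E →ₗ[ℝ] E) × E} : (∀ l ∈ liftSet W br, opair X l = 0) ↔ X ∈ liftSet W br :=
  ⟨mem_liftSet_of_forall_opair_eq_zero hskew, fun hX _ => opair_eq_zero_of_mem_liftSet hskew hX⟩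

theorem coboundary_iff_inner_general (hskew : ∀ v w : W, br v w = -br w v)
    (A : E →ₗ[ℝ] E) (u : E) :
    (∃ e : E, ∀ l ∈ liftSet W br, opair (A, u) l = l.1 e) ↔
      ∃ v₀ : W, ∀ w : W, A w = (br v₀ w : E) := by
  have hsurj : Function.Surjective fun e : E => u - (2 : ℝ) • e := fun v =>
    ⟨(1 / 2 : ℝ) • (u - v), by module⟩
  calc (∃ e : E, ∀ l ∈ liftSet W br, opair (A, u) l = l.1 e)
      ↔ ∃ e : E, (A, u - (2 : ℝ) • e) ∈ liftSet W br := by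
        simp only [opair_eq_apply_iff, forall_opair_eq_zero_iff_mem_liftSet hskew]
    _ ↔ ∃ v : E, (A, v) ∈ liftSet W br :=
        (hsurj.exists (p := fun v => (A, v) ∈ liftSet W br)).symm
    _ ↔ ∃ v₀ : W, ∀ w : W, A w = (br v₀ w : E) := exists_mk_mem_liftSet_iff

end LiftedDiracStructure

/-- For `(A,u)` in the normalizer of `L_W`, the 1-cochain `ω_{(A,u)}(l) = ⟨(A,u),l⟩`
is a coboundary — i.e. there is `e ∈ V` with `⟨(A,u),l⟩ = l.1(e)` for all `l ∈ L_W` —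
if and only if `A` restricts to an inner derivation of `(W,[·,·])`. -/
theorem coboundary_iff_inner (W : Submodule ℝ V) (br : W →ₗ[ℝ] W →ₗ[ℝ] W)
    (hskew : ∀ v w : W, br v w = - br w v)
    (hjacobi : ∀ u v w : W, br u (br v w) + br v (br w u) + br w (br u v) = 0)
    (A : V →ₗ[ℝ] V) (u : V)
    (hnorm : ∀ l ∈ liftSet W br, obr (A, u) l ∈ liftSet W br) :
    (∃ e : V, ∀ l ∈ liftSet W br, opair (A, u) l = l.1 e) ↔
      (∃ v₀ : W, ∀ w : W, A w = (br v₀ w : V)) :=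
  coboundary_iff_inner_general hskew A u
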